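/- arXiv:1107.2876 — 3 statements merged into one kernel-verified Lean document; each statement's English description precedes it below -/
import Mathlib

section
/- Let ν ∈ (0,1], λ_α, λ_β > 0, t > 0, and define the Mittag–Leffler function E_{ν,1}(x) = Σ_{n=0}^∞ x^n / Γ(νn + 1). Let u ∈ [0,1) be such that e^{λ_α(u−1)} / (1 − e^{λ_α(u−1)}) < 1. Then the probability generating function of the homogeneous Poisson process N_α subordinated to an independent fractional linear birth process Y^ν with one progenitor satisfies Σ_{k=0}^∞ u^k Σ_{r=1}^∞ e^{−λ_α r} (λ_α r)^k / k! · Σ_{j=1}^{r} C(r−1, j−1) (−1)^{j−1} E_{ν,1}(−λ_β j t^ν) = Σ_{j=1}^∞ (−1)^{j−1} (e^{λ_α(u−1)} / (1 − e^{λ_α(u−1)}))^j · E_{ν,1}(−λ_β j t^ν). -/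
open Real

/-- The Mittag–Leffler function `E_{ν,1}(x) = Σ_{n=0}^∞ x^n / Γ(νn + 1)`. -/
noncomputable def mittagLeffler (ν x : ℝ) : ℝ :=
  ∑' n : ℕ, x ^ n / Real.Gamma (ν * n + 1)

open Filter Topology

/-! ### Coefficients of `(1 - s) ^ (-a)` -/

lemma succ_mul_multichoose_succ (a : ℝ) (n : ℕ) :
    ((n : ℝ) + 1) * Ring.multichoose a (n + 1) = (a + n) * Ring.multichoose a n := by
  have h1 := Ring.factorial_nsmul_multichoose_eq_ascPochhammer a (n + 1)
  have h0 := Ring.factorial_nsmul_multichoose_eq_ascPochhammer a n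
  rw [Polynomial.ascPochhammer_smeval_eq_eval, nsmul_eq_mul] at h1 h0
  rw [ascPochhammer_succ_eval, ← h0, Nat.factorial_succ] at h1
  push_cast at h1
  have hn : (n.factorial : ℝ) ≠ 0 := by positivity
  apply mul_left_cancel₀ hn
  linear_combination h1

lemma multichoose_nonneg {a : ℝ} (ha : 0 ≤ a) (n : ℕ) : 0 ≤ Ring.multichoose a n := by
  induction n with
  | zero => simp
  | succ n ih =>
    have h := succ_mul_multichoose_succ a n
    have h2 : 0 ≤ (a + n) * Ring.multichoose a n := by positivity
    rw [← h] at h2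
    exact nonneg_of_mul_nonneg_right h2 (by positivity)

lemma multichoose_neg_succ_nonpos {ν : ℝ} (hν : ν ∈ Set.Ioc (0 : ℝ) 1) (n : ℕ) :
    Ring.multichoose (-ν) (n + 1) ≤ 0 := by
  induction n with
  | zero => simpa using hν.1.le
  | succ n ih =>
    have h := succ_mul_multichoose_succ (-ν) (n + 1)
    have h2 : (-ν + (n + 1 : ℕ)) * Ring.multichoose (-ν) (n + 1) ≤ 0 := by
      refine mul_nonpos_of_nonneg_of_nonpos ?_ ih
      have := hν.2
      have : (0 : ℝ) ≤ n := n.cast_nonneg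
      push_cast
      linarith
    rw [← h] at h2
    exact nonpos_of_mul_nonpos_right h2 (by positivity)

lemma multichoose_add_eq_sum_antidiagonal (a b : ℝ) (n : ℕ) :
    Ring.multichoose (a + b) n =
      ∑ ij ∈ Finset.HasAntidiagonal.antidiagonal n, Ring.multichoose a ij.1 * Ring.multichoose b ij.2 := by
  have key (c : ℝ) (k : ℕ) : Ring.multichoose c k = (-1) ^ k * Ring.choose (-c) k := by
    rw [Ring.choose_neg', Units.smul_def, zsmul_eq_mul, Int.cast_negOnePow_natCast, ← mul_assoc,
      ← mul_pow]
    simp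
  simp only [key]
  rw [neg_add, Ring.add_choose_eq n (Commute.all _ _), Finset.mul_sum]
  refine Finset.sum_congr rfl fun ij hij => ?_
  rw [← Finset.HasAntidiagonal.mem_antidiagonal.1 hij, pow_add]
  ring

lemma hasSum_multichoose_mul_pow (a : ℝ) {s : ℝ} (hs : |s| < 1) :
    HasSum (fun n => Ring.multichoose a n * s ^ n) (1 / (1 - s) ^ a) := by
  have h := (Real.one_div_one_sub_rpow_hasFPowerSeriesOnBall_zero a).hasSum (y := s)
    (by simpa [enorm_eq_nnnorm] using! hs)
  simpa [Ring.multichoose_eq, mul_comm] using h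

lemma multichoose_add_one_mul_le {a s : ℝ} (ha : 0 ≤ a) (h0 : 0 < s) (h1 : s < 1) (n : ℕ) :
    Ring.multichoose (a + 1) n * (s ^ n * (1 - s) ^ a) ≤ 1 := by
  have hs : 0 < (1 - s) ^ a := Real.rpow_pos_of_pos (by linarith) a
  have h : Ring.multichoose (a + 1) n * s ^ n ≤ 1 / (1 - s) ^ a := by
    rw [multichoose_add_eq_sum_antidiagonal, Finset.Nat.sum_antidiagonal_eq_sum_range_succ_mk,
      Finset.sum_mul]
    refine le_trans (Finset.sum_le_sum fun i hi => ?_)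
      ((hasSum_multichoose_mul_pow a (by rwa [abs_of_pos h0])).summable.sum_le_tsum
        (Finset.range n.succ) fun i _ => by have := multichoose_nonneg ha i; positivity) |>.trans
      (hasSum_multichoose_mul_pow a (by rwa [abs_of_pos h0])).tsum_eq.le
    simp only [Ring.multichoose_one, mul_one]
    exact mul_le_mul_of_nonneg_left
      (pow_le_pow_of_le_one h0.le h1.le (Nat.lt_succ_iff.1 (Finset.mem_range.1 hi)))
      (multichoose_nonneg ha i)
  rw [le_div_iff₀ hs] at h
  linarith

lemma prod_range_add_eq_multichoose (a : ℝ) (n : ℕ) :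
    ∏ j ∈ Finset.range (n + 1), (a + j) =
      a * (n.factorial * Ring.multichoose (a + 1) n) := by
  induction n with
  | zero => simp
  | succ n ih =>
    rw [Finset.prod_range_succ, ih, Nat.factorial_succ]
    have h := succ_mul_multichoose_succ (a + 1) n
    push_cast
    linear_combination (-a * n.factorial) * h

lemma tendsto_multichoose_div_rpow {a : ℝ} (ha : 0 ≤ a) :
    Tendsto (fun n : ℕ => Ring.multichoose (a + 1) n / (n : ℝ) ^ a) atTop
      (𝓝 (1 / Real.Gamma (a + 1))) := by
  rcases ha.eq_or_lt with rfl | ha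
  · simp
  have h := ((Real.GammaSeq_tendsto_Gamma a).const_mul a).inv₀
    (mul_ne_zero ha.ne' (Real.Gamma_pos_of_pos ha).ne')
  rw [Real.Gamma_add_one ha.ne', one_div]
  refine h.congr fun n => ?_
  have hn : (n.factorial : ℝ) ≠ 0 := by positivity
  rw [Real.GammaSeq, prod_range_add_eq_multichoose]
  field_simp

/-! ### Bounds on the Mittag–Leffler function on the negative axis -/

/-- Discrete positivity principle for Volterra convolution equations. -/
lemma nonneg_of_convolution_nonneg {A T : ℕ → ℝ} {h : ℝ} (h0 : 0 < A 0 + h)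
    (hA : ∀ n, A (n + 1) ≤ 0)
    (hR : ∀ n, 0 ≤ ∑ ij ∈ Finset.HasAntidiagonal.antidiagonal n, A ij.1 * T ij.2 + h * T n) (n : ℕ) :
    0 ≤ T n := by
  induction n using Nat.strong_induction_on with
  | _ n ih =>
    have hn := hR n
    cases n with
    | zero =>
      simp only [Finset.Nat.antidiagonal_zero, Finset.sum_singleton] at hn
      exact nonneg_of_mul_nonneg_right (by linarith) h0
    | succ n =>
      rw [Finset.Nat.sum_antidiagonal_succ] at hn
      have hs : ∑ ij ∈ Finset.HasAntidiagonal.antidiagonal n, A (ij.1 + 1) * T ij.2 ≤ 0 :=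
        Finset.sum_nonpos fun ij hij => mul_nonpos_of_nonpos_of_nonneg (hA _)
          (ih _ (by have := Finset.HasAntidiagonal.mem_antidiagonal.1 hij; omega))
      exact nonneg_of_mul_nonneg_right (a := A 0 + h) (by linarith) h0

lemma abs_neg_pow_mul_multichoose_le {ν h s : ℝ} (hν : 0 ≤ ν) (hh : 0 ≤ h) (h0 : 0 < s)
    (h1 : s < 1) (n m : ℕ) :
    |(-h) ^ m * Ring.multichoose (ν * m + 1) n| ≤ (s ^ n)⁻¹ * (h / (1 - s) ^ ν) ^ m := by
  have hs : 0 < 1 - s := by linarith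
  have hB := multichoose_add_one_mul_le (a := ν * m) (by positivity) h0 h1 n
  have hB0 := multichoose_nonneg (a := ν * m + 1) (by positivity) n
  rw [Real.rpow_mul hs.le, Real.rpow_natCast] at hB
  have hp : 0 < s ^ n * ((1 - s) ^ ν) ^ m := by positivity
  rw [abs_mul, abs_pow, abs_neg, abs_of_nonneg hh, abs_of_nonneg hB0, div_pow]
  rw [← le_div_iff₀ hp] at hB
  calc h ^ m * Ring.multichoose (ν * m + 1) n
      ≤ h ^ m * (1 / (s ^ n * ((1 - s) ^ ν) ^ m)) := by gcongr
    _ = _ := by field_simp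

/-- The discretised Mittag–Leffler function takes values in the unit interval. -/
lemma tsum_neg_pow_mul_multichoose_mem_Icc {ν h s : ℝ} (hν : ν ∈ Set.Ioc (0 : ℝ) 1) (hh : 0 < h)
    (h0 : 0 < s) (h1 : s < 1) (hs : h < (1 - s) ^ ν) (n : ℕ) :
    ∑' m : ℕ, (-h) ^ m * Ring.multichoose (ν * m + 1) n ∈ Set.Icc (0 : ℝ) 1 := by
  have hpos : 0 < (1 - s) ^ ν := hh.trans hs
  have hsum (k : ℕ) : Summable fun m : ℕ => (-h) ^ m * Ring.multichoose (ν * m + 1) k :=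
    .of_norm_bounded ((summable_geometric_of_lt_one (by positivity)
      ((div_lt_one hpos).2 hs)).mul_left _)
      fun m => abs_neg_pow_mul_multichoose_le hν.1.le hh.le h0 h1 k m
  set S : ℕ → ℝ := fun k => ∑' m : ℕ, (-h) ^ m * Ring.multichoose (ν * m + 1) k
  have hconv (k : ℕ) : ∑ ij ∈ Finset.HasAntidiagonal.antidiagonal k, Ring.multichoose (-ν) ij.1 * S ij.2 + h * S k
      = Ring.multichoose (1 - ν) k := by
    have e1 : HasSum (fun m : ℕ => (-h) ^ m * Ring.multichoose (ν * m + 1 - ν) k)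
        (∑ ij ∈ Finset.HasAntidiagonal.antidiagonal k, Ring.multichoose (-ν) ij.1 * S ij.2) := by
      have := hasSum_sum (s := Finset.HasAntidiagonal.antidiagonal k) fun ij _ =>
        (hsum ij.2).hasSum.mul_left (Ring.multichoose (-ν) ij.1)
      refine this.congr_fun fun m => ?_
      rw [show ν * m + 1 - ν = -ν + (ν * m + 1) by ring, multichoose_add_eq_sum_antidiagonal,
        Finset.mul_sum]
      exact Finset.sum_congr rfl fun _ _ => by ring
    have e2 : HasSum (fun m : ℕ => (-h) ^ m * Ring.multichoose (ν * m + 1 - ν) k)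
        (Ring.multichoose (1 - ν) k + -h * S k) := by
      have := (hsum k).hasSum.mul_left (-h)
      rw [← hasSum_nat_add_iff' 1]
      simp only [Finset.range_one, Finset.sum_singleton, pow_zero, Nat.cast_zero, mul_zero,
        zero_add, one_mul, add_sub_cancel_left]
      refine this.congr_fun fun m => ?_
      push_cast
      rw [show ν * ((m : ℝ) + 1) + 1 - ν = ν * m + 1 by ring]
      ring
    linarith [e1.unique e2]
  have hA0 : 0 < Ring.multichoose (-ν) 0 + h := by simp; linarith
  refine ⟨nonneg_of_convolution_nonneg (T := S) hA0 (multichoose_neg_succ_nonpos hν)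
    (fun k => ?_) n, ?_⟩
  · rw [hconv]
    exact multichoose_nonneg (by linarith [hν.2]) k
  · rw [← sub_nonneg]
    refine nonneg_of_convolution_nonneg (T := fun k => 1 - S k) hA0
      (multichoose_neg_succ_nonpos hν) (fun k => ?_) n
    have hone := multichoose_add_eq_sum_antidiagonal (-ν) 1 k
    simp only [Ring.multichoose_one, mul_one] at hone
    rw [show -ν + 1 = 1 - ν by ring] at hone
    simp only [mul_sub, mul_one, Finset.sum_sub_distrib]
    linarith [hconv k]

lemma mittagLeffler_neg_mem_Icc {ν x : ℝ} (hν : ν ∈ Set.Ioc (0 : ℝ) 1) (hx : 0 < x) :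
    mittagLeffler ν (-x) ∈ Set.Icc (0 : ℝ) 1 := by
  obtain ⟨hν0, hν1⟩ := hν
  set K : ℝ := (2 * x) ^ ν⁻¹ with hK
  have hKpos : 0 < K := by positivity
  have hKν : K ^ ν = 2 * x := by
    rw [hK, ← Real.rpow_mul (by positivity), inv_mul_cancel₀ hν0.ne', Real.rpow_one]
  have hlarge : ∀ᶠ n : ℕ in atTop, K < n :=
    tendsto_natCast_atTop_atTop.eventually_gt_atTop K
  have hratio {n : ℕ} (hn : K < n) :
      x / (n : ℝ) ^ ν / (1 - (1 - K / n)) ^ ν = 1 / 2 := by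
    have hn0 : (0 : ℝ) < n := hKpos.trans hn
    rw [sub_sub_cancel, Real.div_rpow hKpos.le hn0.le, hKν]
    have : 0 < (n : ℝ) ^ ν := by positivity
    field_simp
  have hs {n : ℕ} (hn : K < n) : 0 < 1 - K / n ∧ 1 - K / n < 1 := by
    have hn0 : (0 : ℝ) < n := hKpos.trans hn
    exact ⟨sub_pos.2 ((div_lt_one hn0).2 hn), sub_lt_self _ (by positivity)⟩
  have hexp : ∀ᶠ n : ℕ in atTop, ((1 - K / n) ^ n)⁻¹ ≤ 2 * Real.exp K := by
    have h := (Real.tendsto_one_add_div_pow_exp (-K)).inv₀ (Real.exp_ne_zero _)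
    rw [Real.exp_neg, inv_inv] at h
    filter_upwards [h.eventually_lt_const (by linarith [Real.exp_pos K] :
      Real.exp K < 2 * Real.exp K)] with n hn
    rw [neg_div, ← sub_eq_add_neg] at hn
    exact hn.le
  have hlim : Tendsto (fun n : ℕ => ∑' m : ℕ, (-(x / (n : ℝ) ^ ν)) ^ m *
      Ring.multichoose (ν * m + 1) n) atTop (𝓝 (mittagLeffler ν (-x))) := by
    refine tendsto_tsum_of_dominated_convergence
      (bound := fun m => 2 * Real.exp K * (1 / 2) ^ m)
      (summable_geometric_two.mul_left _) (fun m => ?_) ?_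
    · have h := (tendsto_multichoose_div_rpow (a := ν * m) (by positivity)).const_mul ((-x) ^ m)
      rw [mul_one_div] at h
      refine h.congr fun n => ?_
      rw [Real.rpow_mul n.cast_nonneg, Real.rpow_natCast, ← neg_div, div_pow]
      ring
    · filter_upwards [hlarge, hexp] with n hn hn' m
      have h := abs_neg_pow_mul_multichoose_le hν0.le (h := x / (n : ℝ) ^ ν) (by positivity)
        (hs hn).1 (hs hn).2 n m
      rw [hratio hn] at h
      exact h.trans (by gcongr)
  refine isClosed_Icc.mem_of_tendsto hlim ?_
  filter_upwards [hlarge] with n hn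
  have hn0 : (0 : ℝ) < n := hKpos.trans hn
  refine tsum_neg_pow_mul_multichoose_mem_Icc ⟨hν0, hν1⟩ (by positivity) (hs hn).1 (hs hn).2 ?_ n
  have hp : 0 < (1 - (1 - K / n)) ^ ν := by
    rw [sub_sub_cancel]
    positivity
  rw [← div_lt_one hp, hratio hn]
  norm_num

/-! ### Interchange of summations -/

lemma hasSum_choose_mul_pow_succ (j : ℕ) {z : ℝ} (hz : |z| < 1) :
    HasSum (fun r : ℕ => (r.choose j : ℝ) * z ^ (r + 1)) ((z / (1 - z)) ^ (j + 1)) := by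
  have h := (hasSum_choose_mul_geometric_of_norm_lt_one j hz).mul_left (z ^ (j + 1))
  rw [← hasSum_nat_add_iff' j, Finset.sum_eq_zero, sub_zero, div_pow]
  · rw [mul_one_div] at h
    exact h.congr_fun fun r => by ring
  · intro r hr
    simp [Nat.choose_eq_zero_of_lt (Finset.mem_range.1 hr)]

lemma hasSum_choose_mul (r : ℕ) (f : ℕ → ℝ) :
    HasSum (fun j : ℕ => (r.choose j : ℝ) * f j)
      (∑ j ∈ Finset.range (r + 1), (r.choose j : ℝ) * f j) :=
  hasSum_sum_of_ne_finset_zero fun j hj => by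
    rw [Nat.choose_eq_zero_of_lt (by simpa using hj)]
    simp

lemma sum_range_choose_mul_le {f : ℕ → ℝ} (hf : ∀ j, f j ≤ 1) (r : ℕ) :
    ∑ j ∈ Finset.range (r + 1), (r.choose j : ℝ) * f j ≤ 2 ^ r := by
  calc ∑ j ∈ Finset.range (r + 1), (r.choose j : ℝ) * f j
      ≤ ∑ j ∈ Finset.range (r + 1), (r.choose j : ℝ) :=
        Finset.sum_le_sum fun j _ => mul_le_of_le_one_right (Nat.cast_nonneg _) (hf j)
    _ = 2 ^ r := by exact_mod_cast Nat.sum_range_choose r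

lemma summable_pow_succ_mul_two_pow {z : ℝ} (hz0 : 0 ≤ z) (hz : z < 1 / 2) :
    Summable fun r : ℕ => z ^ (r + 1) * 2 ^ r := by
  refine ((summable_geometric_of_lt_one (r := z * 2) (by linarith) (by linarith)).mul_left
    z).congr fun r => ?_
  rw [mul_pow]
  ring

/-- Euler transform of a bounded sequence. -/
lemma tsum_pow_succ_mul_sum_choose {f : ℕ → ℝ} (hf : ∀ j, |f j| ≤ 1) {z : ℝ} (hz0 : 0 ≤ z)
    (hz : z < 1 / 2) :
    ∑' r : ℕ, z ^ (r + 1) * ∑ j ∈ Finset.range (r + 1), (r.choose j : ℝ) * f j =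
      ∑' j : ℕ, (z / (1 - z)) ^ (j + 1) * f j := by
  have hsum : Summable
      (Function.uncurry fun r j : ℕ => z ^ (r + 1) * ((r.choose j : ℝ) * f j)) := by
    rw [← summable_abs_iff]
    have habs (r : ℕ) := (hasSum_choose_mul r fun j => |f j|).mul_left (z ^ (r + 1))
    have heq : (fun p : ℕ × ℕ =>
        |Function.uncurry (fun r j : ℕ => z ^ (r + 1) * ((r.choose j : ℝ) * f j)) p|) =
        fun p => z ^ (p.1 + 1) * ((p.1.choose p.2 : ℝ) * |f p.2|) := by
      ext ⟨r, j⟩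
      simp [abs_mul, abs_of_nonneg hz0]
    rw [heq, summable_prod_of_nonneg fun p => by positivity]
    refine ⟨fun r => (habs r).summable, ?_⟩
    simp only [fun r => (habs r).tsum_eq]
    refine .of_nonneg_of_le (fun r => by positivity) (fun r => ?_)
      (summable_pow_succ_mul_two_pow hz0 hz)
    exact mul_le_mul_of_nonneg_left (sum_range_choose_mul_le hf r) (by positivity)
  calc ∑' r : ℕ, z ^ (r + 1) * ∑ j ∈ Finset.range (r + 1), (r.choose j : ℝ) * f j
      = ∑' (r : ℕ) (j : ℕ), z ^ (r + 1) * ((r.choose j : ℝ) * f j) :=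
        tsum_congr fun r => ((hasSum_choose_mul r f).mul_left _).tsum_eq.symm
    _ = ∑' (j : ℕ) (r : ℕ), z ^ (r + 1) * ((r.choose j : ℝ) * f j) := hsum.tsum_comm.symm
    _ = _ := tsum_congr fun j => by
        rw [← ((hasSum_choose_mul_pow_succ j (z := z)
          (by rw [abs_of_nonneg hz0]; linarith)).mul_right (f j)).tsum_eq]
        exact tsum_congr fun r => by ring

lemma hasSum_pow_mul_poisson (lα u y : ℝ) :
    HasSum (fun k : ℕ => u ^ k * (Real.exp (-lα * y) * (lα * y) ^ k / k.factorial))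
      (Real.exp (lα * (u - 1) * y)) := by
  have h := (NormedSpace.expSeries_div_hasSum_exp (u * (lα * y))).mul_left (Real.exp (-lα * y))
  rw [← Real.exp_eq_exp_ℝ, ← Real.exp_add,
    show -lα * y + u * (lα * y) = lα * (u - 1) * y by ring] at h
  exact h.congr_fun fun k => by rw [mul_pow]; ring

lemma tsum_comm_of_nonneg_weights {w : ℕ → ℕ → ℝ} {c p : ℕ → ℝ} (hw : ∀ r k, 0 ≤ w r k)
    (hc : ∀ r, HasSum (w r) (c r)) (hp : Summable fun r => c r * |p r|) :
    ∑' (k : ℕ) (r : ℕ), w r k * p r = ∑' r, c r * p r := by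
  have hsum : Summable (Function.uncurry fun r k : ℕ => w r k * p r) := by
    rw [← summable_abs_iff]
    have heq : (fun q : ℕ × ℕ => |Function.uncurry (fun r k : ℕ => w r k * p r) q|) =
        fun q => w q.1 q.2 * |p q.1| := by
      ext ⟨r, k⟩
      simp [abs_mul, abs_of_nonneg (hw r k)]
    rw [heq, summable_prod_of_nonneg fun q => mul_nonneg (hw q.1 q.2) (abs_nonneg (p q.1))]
    exact ⟨fun r => (hc r).summable.mul_right |p r|,
      hp.congr fun r => ((hc r).mul_right |p r|).tsum_eq.symm⟩
  exact hsum.tsum_comm.trans (tsum_congr fun r => ((hc r).mul_right (p r)).tsum_eq)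

/-- The generating function of a Poisson mixture with summable weights. -/
lemma tsum_pow_mul_tsum_poisson {lα u : ℝ} (hα : 0 ≤ lα) (hu : 0 ≤ u) {p : ℕ → ℝ}
    (hp : Summable fun r : ℕ => Real.exp (lα * (u - 1)) ^ (r + 1) * |p r|) :
    ∑' k : ℕ, u ^ k * ∑' r : ℕ,
        Real.exp (-lα * ((r : ℝ) + 1)) * (lα * ((r : ℝ) + 1)) ^ k / k.factorial * p r =
      ∑' r : ℕ, Real.exp (lα * (u - 1)) ^ (r + 1) * p r := by
  have hexp (r : ℕ) :
      Real.exp (lα * (u - 1) * ((r : ℝ) + 1)) = Real.exp (lα * (u - 1)) ^ (r + 1) := by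
    rw [← Real.exp_nat_mul]
    push_cast
    ring_nf
  rw [← tsum_comm_of_nonneg_weights (fun r k => by positivity)
    (fun r => hexp r ▸ hasSum_pow_mul_poisson lα u ((r : ℝ) + 1)) hp]
  refine tsum_congr fun k => ?_
  rw [← tsum_mul_left]
  exact tsum_congr fun r => (mul_assoc _ _ _).symm

/-- the probability generating function of the Poisson process
subordinated to an independent fractional linear birth process:
`Σ_k u^k Σ_{r≥1} e^{−λ_α r}(λ_α r)^k/k! Σ_{j=1}^r C(r−1,j−1)(−1)^{j−1} E_{ν,1}(−λ_β j t^ν)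
 = Σ_{j≥1} (−1)^{j−1} (e^{λ_α(u−1)}/(1−e^{λ_α(u−1)}))^j E_{ν,1}(−λ_β j t^ν)`.
(The inner index `r ≥ 1` is written as `r + 1`, `r : ℕ`, and `j ≥ 1` as `j + 1`.) -/
theorem pgf_poisson_sub_fractional_birth (ν lα lβ t u : ℝ) (hν : ν ∈ Set.Ioc (0 : ℝ) 1)
    (hα : 0 < lα) (hβ : 0 < lβ) (ht : 0 < t) (hu : u ∈ Set.Ico (0 : ℝ) 1)
    (hq : Real.exp (lα * (u - 1)) / (1 - Real.exp (lα * (u - 1))) < 1) :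
    ∑' k : ℕ, u ^ k *
      ∑' r : ℕ, Real.exp (-lα * ((r : ℝ) + 1)) * (lα * ((r : ℝ) + 1)) ^ k / (Nat.factorial k) *
        ∑ j ∈ Finset.range (r + 1), (r.choose j : ℝ) * (-1) ^ j *
          mittagLeffler ν (-lβ * ((j : ℝ) + 1) * t ^ ν) =
    ∑' j : ℕ, (-1 : ℝ) ^ j *
      (Real.exp (lα * (u - 1)) / (1 - Real.exp (lα * (u - 1)))) ^ (j + 1) *
        mittagLeffler ν (-lβ * ((j : ℝ) + 1) * t ^ ν) := by
  set z : ℝ := Real.exp (lα * (u - 1))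
  have hz0 : 0 < z := Real.exp_pos _
  have hz1 : z < 1 := Real.exp_lt_one_iff.2 (mul_neg_of_pos_of_neg hα (by linarith [hu.2]))
  have hz2 : z < 1 / 2 := by
    rw [div_lt_one (by linarith)] at hq
    linarith
  set f : ℕ → ℝ := fun j => (-1) ^ j * mittagLeffler ν (-lβ * ((j : ℝ) + 1) * t ^ ν) with hf
  have hf1 (j : ℕ) : |f j| ≤ 1 := by
    have h := mittagLeffler_neg_mem_Icc hν (x := lβ * ((j : ℝ) + 1) * t ^ ν) (by positivity)
    rw [hf, abs_mul, abs_pow, abs_neg, abs_one, one_pow, one_mul,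
      show -lβ * ((j : ℝ) + 1) * t ^ ν = -(lβ * ((j : ℝ) + 1) * t ^ ν) by ring,
      abs_of_nonneg h.1]
    exact h.2
  have hp : Summable fun r : ℕ =>
      z ^ (r + 1) * |∑ j ∈ Finset.range (r + 1), (r.choose j : ℝ) * f j| := by
    refine .of_nonneg_of_le (fun r => by positivity) (fun r => ?_)
      (summable_pow_succ_mul_two_pow hz0.le hz2)
    refine mul_le_mul_of_nonneg_left ((Finset.abs_sum_le_sum_abs _ _).trans ?_) (by positivity)
    simp only [abs_mul, Nat.abs_cast]
    exact sum_range_choose_mul_le hf1 r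
  have h := (tsum_pow_mul_tsum_poisson hα.le hu.1 hp).trans
    (tsum_pow_succ_mul_sum_choose hf1 hz0.le hz2)
  simp only [mul_assoc, mul_left_comm, hf] at h ⊢
  exact h
end

section
/- Let λ_α, λ_β > 0 with λ_β < λ_α, and let k ≥ 1 and r ≥ 0 be integers. Then Σ_{m=0}^∞ (−1)^m (λ_β/λ_α)^{k+m} · (k+m+r−1)! / (r! · m! · (k−1)!) = C(k+r−1, r) · (λ_α/(λ_α+λ_β))^r · (λ_β/(λ_α+λ_β))^k; that is, for ν = 1 the distribution of N_α(τ_k^1) is negative binomial with parameters k and λ_α/(λ_α+λ_β). -/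
open Real

/-- for `ν = 1` the distribution of `N_α(τ_k^1)` is negative binomial with
parameters `k` and `λ_α/(λ_α+λ_β)`:
`Σ_m (−1)^m (λ_β/λ_α)^{k+m} (k+m+r−1)!/(r! m! (k−1)!)
 = C(k+r−1,r) (λ_α/(λ_α+λ_β))^r (λ_β/(λ_α+λ_β))^k`. -/
theorem poisson_at_erlang_negative_binomial (lα lβ : ℝ) (hα : 0 < lα) (hβ : 0 < lβ)
    (hlt : lβ < lα) (k r : ℕ) (hk : 1 ≤ k) :
    ∑' m : ℕ, (-1 : ℝ) ^ m * (lβ / lα) ^ (k + m) *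
      (Nat.factorial (k + m + r - 1) : ℝ) /
        ((Nat.factorial r : ℝ) * (Nat.factorial m : ℝ) * (Nat.factorial (k - 1) : ℝ)) =
    ((k + r - 1).choose r : ℝ) * (lα / (lα + lβ)) ^ r * (lβ / (lα + lβ)) ^ k := by
  obtain ⟨j, rfl⟩ : ∃ j, k = j + 1 := ⟨k - 1, by omega⟩
  have hratio : ‖-(lβ / lα)‖ < 1 := by
    rw [norm_neg, Real.norm_of_nonneg (by positivity)]
    exact (div_lt_one hα).2 hlt
  have hterm (m : ℕ) : (-1 : ℝ) ^ m * (lβ / lα) ^ (j + 1 + m) *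
      (Nat.factorial (j + 1 + m + r - 1) : ℝ) /
        ((Nat.factorial r : ℝ) * (Nat.factorial m : ℝ) * (Nat.factorial (j + 1 - 1) : ℝ)) =
      ((j + r).choose r : ℝ) * (lβ / lα) ^ (j + 1) *
        (((m + (j + r)).choose (j + r) : ℝ) * (-(lβ / lα)) ^ m) := by
    rw [show j + 1 + m + r - 1 = m + (j + r) by omega, Nat.add_sub_cancel,
      ← Nat.choose_symm_add (a := j), ← Nat.choose_symm_add (a := m), Nat.cast_add_choose,
      Nat.cast_add_choose, neg_pow (lβ / lα)]
    field_simp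
    ring
  simp_rw [hterm]
  rw [tsum_mul_left, tsum_choose_mul_geometric_of_norm_lt_one _ hratio,
    show j + 1 + r - 1 = j + r by omega,
    show 1 - -(lβ / lα) = (lα + lβ) / lα by field_simp; ring]
  simp only [div_pow]
  field_simp
  ring
end

section
/- Let ν ∈ (0,1], λ > 0 and a > 0 with a^ν > λ, and define the two-parameter Mittag–Leffler function E_{ν,ν}(z) = Σ_{n=0}^∞ z^n / Γ(ν n + ν). Then the Laplace transform of the Mittag–Leffler waiting-time density satisfies ∫_0^∞ e^{−a s} · λ s^{ν−1} E_{ν,ν}(−λ s^ν) ds = λ / (a^ν + λ). -/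
open Real

/-- The two-parameter Mittag–Leffler function `E_{ν,ν}(z) = Σ_{n=0}^∞ z^n / Γ(νn + ν)`. -/
noncomputable def mittagLeffler2 (ν z : ℝ) : ℝ :=
  ∑' n : ℕ, z ^ n / Real.Gamma (ν * n + ν)

open MeasureTheory in
/-- A power function damped by an exponential is integrable on the positive half-line. -/
lemma integrableOn_rpow_sub_one_mul_exp_neg_mul {p a : ℝ} (hp : 0 < p) (ha : 0 < a) :
    IntegrableOn (fun s : ℝ => s ^ (p - 1) * Real.exp (-(a * s))) (Set.Ioi 0) := by
  refine Integrable.of_integral_ne_zero ?_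
  rw [Real.integral_rpow_mul_exp_neg_mul_Ioi hp ha]
  have := Real.Gamma_pos_of_pos hp
  positivity

open MeasureTheory in
/-- The Laplace transform of `c s^(p-1) / Γ(p)` is `c a^(-p)`. -/
lemma laplace_rpow_div_Gamma {p a : ℝ} (hp : 0 < p) (ha : 0 < a) (c : ℝ) :
    ∫ s in Set.Ioi (0 : ℝ), c / Real.Gamma p * (s ^ (p - 1) * Real.exp (-(a * s))) =
      c * (1 / a) ^ p := by
  rw [integral_const_mul, Real.integral_rpow_mul_exp_neg_mul_Ioi hp ha]
  have := (Real.Gamma_pos_of_pos hp).ne'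
  field_simp

/-- the Laplace transform of the Mittag–Leffler waiting-time density:
`∫_0^∞ e^{−as} λ s^{ν−1} E_{ν,ν}(−λs^ν) ds = λ/(a^ν + λ)` for `a^ν > λ`. -/
theorem laplace_mittag_leffler_density (ν lam a : ℝ) (hν : ν ∈ Set.Ioc (0 : ℝ) 1)
    (hl : 0 < lam) (ha : 0 < a) (hcond : lam < a ^ ν) :
    ∫ s in Set.Ioi (0 : ℝ),
      Real.exp (-a * s) * (lam * s ^ (ν - 1) * mittagLeffler2 ν (-lam * s ^ ν)) =
    lam / (a ^ ν + lam) := by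
  obtain ⟨hν0, -⟩ := hν
  have hp (n : ℕ) : 0 < ν * n + ν := by positivity
  have haν : 0 < a ^ ν := by positivity
  have hpow (n : ℕ) : (1 / a) ^ (ν * n + ν) = (1 / a ^ ν) ^ n * (1 / a ^ ν) := by
    rw [Real.rpow_add (by positivity), Real.rpow_mul (by positivity), Real.rpow_natCast,
      Real.div_rpow zero_le_one ha.le, Real.one_rpow]
  let F : ℕ → ℝ → ℝ := fun n s =>
    lam * (-lam) ^ n / Real.Gamma (ν * n + ν) * (s ^ (ν * n + ν - 1) * Real.exp (-(a * s)))
  have hx : lam / a ^ ν < 1 := (div_lt_one haν).2 hcond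
  have hx0 : 0 < lam / a ^ ν := by positivity
  have hnorm (n : ℕ) : ∫ s in Set.Ioi (0 : ℝ), ‖F n s‖ =
      lam / a ^ ν * (lam / a ^ ν) ^ n := by
    have h := laplace_rpow_div_Gamma (hp n) ha (lam * lam ^ n)
    rw [hpow] at h
    calc ∫ s in Set.Ioi (0 : ℝ), ‖F n s‖ = _ := by
          refine MeasureTheory.setIntegral_congr_fun measurableSet_Ioi fun s hs => ?_
          have hs : 0 < s := hs
          simp only [F, norm_mul, norm_div, norm_pow, norm_neg, Real.norm_eq_abs, Real.abs_exp,
            abs_of_pos hl, abs_of_pos (Real.Gamma_pos_of_pos (hp n)),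
            abs_of_pos (Real.rpow_pos_of_pos hs _)]
      _ = _ := h
      _ = _ := by ring
  have hint (n : ℕ) : ∫ s in Set.Ioi (0 : ℝ), F n s =
      lam / a ^ ν * (-(lam / a ^ ν)) ^ n := by
    have h := laplace_rpow_div_Gamma (hp n) ha (lam * (-lam) ^ n)
    rw [hpow] at h
    refine h.trans ?_
    rw [← neg_div, div_pow, div_pow]
    ring
  have hsum := MeasureTheory.hasSum_integral_of_summable_integral_norm (F := F)
    (μ := MeasureTheory.volume.restrict (Set.Ioi 0))
    (fun n => (integrableOn_rpow_sub_one_mul_exp_neg_mul (hp n) ha).const_mul _)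
    (by
      simp_rw [hnorm]
      exact (summable_geometric_of_lt_one hx0.le hx).mul_left _)
  simp_rw [hint] at hsum
  have hgeom : HasSum (fun n : ℕ => lam / a ^ ν * (-(lam / a ^ ν)) ^ n)
      (lam / a ^ ν * (1 - -(lam / a ^ ν))⁻¹) :=
    (hasSum_geometric_of_abs_lt_one (by rwa [abs_neg, abs_of_pos hx0])).mul_left _
  calc _ = ∫ s in Set.Ioi (0 : ℝ), ∑' n, F n s := by
        refine MeasureTheory.setIntegral_congr_fun measurableSet_Ioi fun s hs => ?_
        have hs : 0 < s := hs
        simp only [mittagLeffler2]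
        rw [← tsum_mul_left, ← tsum_mul_left]
        refine tsum_congr fun n => ?_
        have hsp : s ^ (ν * n + ν - 1) = (s ^ ν) ^ n * s ^ (ν - 1) := by
          rw [add_sub_assoc, Real.rpow_add hs, Real.rpow_mul hs.le, Real.rpow_natCast]
        simp only [F]
        rw [hsp, mul_pow, neg_mul a s]
        ring
    _ = _ := hsum.unique hgeom
    _ = _ := by
        rw [sub_neg_eq_add]
        field_simp
end
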